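/- Let G be a Tanner graph with a rooted tree decomposition, and let t be an introduce node with single child t' introducing a check node c, i.e. B_t = B_{t'} ∪ {c} with c ∈ R and c ∉ B_{t'}. Then for every R' ⊆ B_t^c and Q ⊆ B_t^v, a set S is a trapping set with parameters (R',Q) in G_t if and only if either (|N_{G_t}(c) ∩ Q| is odd, c ∈ R', and S is a trapping set with parameters (R' \ {c}, Q) in G_{t'}), or (|N_{G_t}(c) ∩ Q| is even, c ∉ R', and S is a trapping set with parameters (R',Q) in G_{t'}). -/

import Mathlib

/-- A Tanner graph: a bipartite graph on vertex set `V` partitioned into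
variable nodes `L` and check nodes `R`, every edge joining `L` and `R`. -/
structure TannerGraph (V : Type*) where
  G : SimpleGraph V
  L : Set V
  R : Set V
  disj : Disjoint L R
  cover : L ∪ R = Set.univ
  bipartite : ∀ ⦃u v⦄, G.Adj u v → (u ∈ L ∧ v ∈ R) ∨ (u ∈ R ∧ v ∈ L)

/-- `Γ_o(G[S])`: check nodes having an odd number of neighbours in `S`. -/
def TannerGraph.Gamma {V : Type*} (TG : TannerGraph V) (S : Set V) : Set V :=
  {c | c ∈ TG.R ∧ Odd ((TG.G.neighborSet c ∩ S).ncard)}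

/-- A rooted tree decomposition of the graph `G`: `T` is a finite tree with
root `root` and bags `B i ⊆ V` covering all vertices and edges, such that for
every vertex the set of bags containing it induces a connected subgraph of `T`. -/
structure IsRootedTreeDecomp {V ι : Type*} (G : SimpleGraph V)
    (T : SimpleGraph ι) (root : ι) (B : ι → Set V) : Prop where
  isTree : T.IsTree
  covers : ∀ v, ∃ i, v ∈ B i
  coversEdge : ∀ ⦃u v⦄, G.Adj u v → ∃ i, u ∈ B i ∧ v ∈ B i
  connBags : ∀ v, (T.induce {i | v ∈ B i}).Connected

/-- `Desc T root t i`: `i` is a descendant of `t` in the tree `T` rooted at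
`root`, i.e. `t` lies on a path from the root to `i` (`t` itself included). -/
def Desc {ι : Type*} (T : SimpleGraph ι) (root : ι) (t i : ι) : Prop :=
  ∃ p : T.Walk root i, p.IsPath ∧ t ∈ p.support

/-- `IsChildOf T root s t`: `s` is a child of `t` in the rooted tree. -/
def IsChildOf {ι : Type*} (T : SimpleGraph ι) (root : ι) (s t : ι) : Prop :=
  T.Adj t s ∧ Desc T root t s

/-- `∪_{i ∈ T_t} B_i`: union of the bags over all descendants of `t`;
this is the vertex set of the induced subgraph `G_t`. -/
def subVerts {V ι : Type*} (T : SimpleGraph ι) (root : ι) (B : ι → Set V)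
    (t : ι) : Set V :=
  {v | ∃ i, Desc T root t i ∧ v ∈ B i}

/-- `Γ_o(G_t[S])`, where `W` is the vertex set of `G_t`: check nodes of `G_t`
having an odd number of `G_t`-neighbours in `S`. -/
def GammaLoc {V : Type*} (TG : TannerGraph V) (W S : Set V) : Set V :=
  {c | c ∈ TG.R ∧ c ∈ W ∧ Odd ((TG.G.neighborSet c ∩ W ∩ S).ncard)}

/-- `S` is a trapping set with parameters `(R', Q)` in `G_t`, where `W` is the
vertex set of `G_t` and `Bt` is the bag at `t`. -/
def HasParams {V : Type*} (TG : TannerGraph V) (W Bt S R' Q : Set V) : Prop :=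
  S.Nonempty ∧ S ⊆ W ∩ TG.L ∧ S ∩ (Bt ∩ TG.L) = Q ∧ GammaLoc TG W S = R'

/-- `S` is a trapping set with extended parameters `(I, Q, d)` in `G_t`. -/
def HasExtParams {V : Type*} (TG : TannerGraph V) (W Bt S I Q : Set V)
    (d : ℕ) : Prop :=
  S.Nonempty ∧ S ⊆ W ∩ TG.L ∧ S ∩ (Bt ∩ TG.L) = Q ∧
    GammaLoc TG W S ∩ (Bt ∩ TG.R) = I ∧ (GammaLoc TG W S \ (Bt ∩ TG.R)).ncard = d

/-- `Γ_o(G_t[Q ∪ B_t^c]) = {c ∈ B_t^c : |N_{G_t}(c) ∩ Q| is odd}`. -/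
def GammaBag {V : Type*} (TG : TannerGraph V) (W Bt Q : Set V) : Set V :=
  {c | c ∈ Bt ∩ TG.R ∧ Odd ((TG.G.neighborSet c ∩ W ∩ Q).ncard)}

/-!
A path of `T` leaves the set of descendants of a node `s` only through `s` itself. As the bags
containing a given vertex are connected, a vertex lying in bags both below and not below `t'`
lies in `B t'`. So the introduced check node `c` is a vertex of `G_t` but not of `G_{t'}`, and,
every edge lying in some bag, all its neighbours in `G_{t'}` belong to `B t'`. Hence
`N(c) ∩ S = N(c) ∩ Q`, and the parity of this set decides whether `c ∈ Γ_o(G_t[S])`. No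
other check node is affected, because `c` is not a variable node and so `S` lies in `G_{t'}`.
-/

section Desc

variable {ι : Type*} {T : SimpleGraph ι} {r s t i j : ι}

theorem desc_self_of_reachable (h : T.Reachable r i) : Desc T r i i :=
  let ⟨p, hp⟩ := h.exists_isPath
  ⟨p, hp, p.end_mem_support⟩

theorem Desc.trans (hT : T.IsAcyclic) (hts : Desc T r t s) (hsi : Desc T r s i) :
    Desc T r t i := by
  classical
  obtain ⟨p, hp, htp⟩ := hts
  obtain ⟨q, hq, hsq⟩ := hsi
  obtain rfl : p = q.takeUntil s hsq :=
    congrArg Subtype.val ((hT.subsingleton_path r s).elim ⟨p, hp⟩ ⟨_, hq.takeUntil hsq⟩)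
  exact ⟨q, hq, q.support_takeUntil_subset_support hsq htp⟩

theorem IsChildOf.not_desc (hT : T.IsAcyclic) (h : IsChildOf T r s t) : ¬ Desc T r s t := by
  rintro ⟨p, hp, hsp⟩
  obtain ⟨hadj, q, hq, htq⟩ := h
  exact hT.ne_mem_support_of_support_of_adj_of_isPath hp hq hadj hsp htq

theorem exists_isChildOf_mem_support {p : T.Walk r i} (hp : p.IsPath) (ht : t ∈ p.support)
    (hne : t ≠ i) : ∃ s ∈ p.support, IsChildOf T r s t := by
  induction p using SimpleGraph.Walk.concatRec with
  | Hnil => simp_all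
  | @Hconcat r j i q hadj ih =>
    obtain ⟨hq, -⟩ := (SimpleGraph.Walk.concat_isPath_iff hadj).1 hp
    have htq : t ∈ q.support := by simpa [SimpleGraph.Walk.support_concat, hne] using ht
    rcases eq_or_ne t j with rfl | htj
    · exact ⟨i, SimpleGraph.Walk.end_mem_support _, hadj, _, hp, ht⟩
    · obtain ⟨s, hsq, hs⟩ := ih hq htq htj
      exact ⟨s, q.support_subset_support_concat hadj hsq, hs⟩

theorem Desc.eq_or_exists_isChildOf (h : Desc T r t i) :
    t = i ∨ ∃ s, IsChildOf T r s t ∧ Desc T r s i := by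
  obtain ⟨p, hp, ht⟩ := h
  refine or_iff_not_imp_left.2 fun hne => ?_
  obtain ⟨s, hsp, hs⟩ := exists_isChildOf_mem_support hp ht hne
  exact ⟨s, hs, p, hp, hsp⟩

theorem Desc.eq_of_adj_of_not_desc (hT : T.IsAcyclic) (hi : Desc T r s i) (hj : ¬ Desc T r s j)
    (hadj : T.Adj i j) : i = s := by
  classical
  obtain ⟨p, hp, hsp⟩ := hi
  have hjp : j ∈ p.support := by
    by_contra hjp
    exact hj ⟨p.concat hadj, hp.concat hjp hadj, p.support_subset_support_concat hadj hsp⟩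
  rw [hT.path_concat (hp.takeUntil hjp) hp hadj.symm hjp, SimpleGraph.Walk.support_concat,
    List.mem_append, List.mem_singleton] at hsp
  exact (hsp.resolve_left fun hs => hj ⟨_, hp.takeUntil hjp, hs⟩).symm

end Desc

section subVerts

variable {V ι : Type*} {G : SimpleGraph V} {T : SimpleGraph ι} {root s t j : ι} {B : ι → Set V}
  {u v : V}

theorem bag_subset_subVerts (h : T.Reachable root t) : B t ⊆ subVerts T root B t :=
  fun _ hv => ⟨t, desc_self_of_reachable h, hv⟩

theorem subVerts_eq_bag_union_biUnion_isChildOf (hT : T.IsTree) :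
    subVerts T root B t = B t ∪ ⋃ s ∈ {s | IsChildOf T root s t}, subVerts T root B s := by
  ext v
  rw [Set.mem_union, Set.mem_iUnion₂]
  constructor
  · rintro ⟨i, hi, hv⟩
    rcases hi.eq_or_exists_isChildOf with rfl | ⟨s, hs, hsi⟩
    · exact Or.inl hv
    · exact Or.inr ⟨s, hs, i, hsi, hv⟩
  · rintro (hv | ⟨s, hs, i, hi, hv⟩)
    · exact bag_subset_subVerts (hT.connected root t) hv
    · exact ⟨i, hs.2.trans hT.isAcyclic hi, hv⟩

theorem IsRootedTreeDecomp.mem_bag_of_mem_subVerts_of_not_desc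
    (hD : IsRootedTreeDecomp G T root B) (hv : v ∈ subVerts T root B s)
    (hj : ¬ Desc T root s j) (hvj : v ∈ B j) : v ∈ B s := by
  obtain ⟨i, hi, hvi⟩ := hv
  obtain ⟨w⟩ := (hD.connBags v).preconnected ⟨i, hvi⟩ ⟨j, hvj⟩
  obtain ⟨d, -, hfst, hsnd⟩ := w.exists_boundary_dart {x | Desc T root s x.1} hi hj
  have hds : d.fst.1 = s := hfst.eq_of_adj_of_not_desc hD.isTree.isAcyclic hsnd d.adj
  exact hds ▸ d.fst.2

theorem IsRootedTreeDecomp.mem_bag_of_adj_of_notMem_subVerts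
    (hD : IsRootedTreeDecomp G T root B) (hadj : G.Adj u v) (hu : u ∉ subVerts T root B s)
    (hv : v ∈ subVerts T root B s) : v ∈ B s := by
  obtain ⟨j, huj, hvj⟩ := hD.coversEdge hadj
  exact hD.mem_bag_of_mem_subVerts_of_not_desc hv (fun hj => hu ⟨j, hj, huj⟩) hvj

end subVerts

section TrappingSet

variable {V : Type*} {TG : TannerGraph V} {W U A S R' Q : Set V} {c : V}

theorem gammaLoc_eq_inter_gamma (hS : S ⊆ W) : GammaLoc TG W S = W ∩ TG.Gamma S := by
  ext c
  simp only [GammaLoc, TannerGraph.Gamma, Set.inter_assoc, Set.inter_eq_right.2 hS,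
    Set.mem_inter_iff, Set.mem_ofPred_eq]
  exact and_left_comm

theorem hasParams_iff_inter_gamma_eq :
    HasParams TG W A S R' Q ↔
      S.Nonempty ∧ S ⊆ W ∩ TG.L ∧ S ∩ (A ∩ TG.L) = Q ∧ W ∩ TG.Gamma S = R' := by
  refine and_congr_right fun _ => and_congr_right fun hS => ?_
  rw [gammaLoc_eq_inter_gamma (hS.trans Set.inter_subset_left)]

theorem TannerGraph.notMem_L_of_mem_R (hc : c ∈ TG.R) : c ∉ TG.L :=
  Set.disjoint_right.1 TG.disj hc

theorem hasParams_insert_of_mem_gamma (hcW : c ∉ W) (hc : c ∈ TG.Gamma S) :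
    HasParams TG (insert c W) (insert c A) S R' Q ↔
      c ∈ R' ∧ HasParams TG W A S (R' \ {c}) Q := by
  have hcL : c ∉ TG.L := TannerGraph.notMem_L_of_mem_R hc.1
  have hcΓ : c ∉ W ∩ TG.Gamma S := fun h => hcW h.1
  have hR' : insert c (W ∩ TG.Gamma S) = R' ↔ c ∈ R' ∧ W ∩ TG.Gamma S = R' \ {c} := by
    grind
  rw [hasParams_iff_inter_gamma_eq, hasParams_iff_inter_gamma_eq,
    Set.insert_inter_of_notMem hcL, Set.insert_inter_of_notMem hcL, Set.insert_inter_of_mem hc, hR']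
  tauto

theorem hasParams_insert_of_notMem_gamma (hcR : c ∈ TG.R) (hcW : c ∉ W) (hc : c ∉ TG.Gamma S) :
    HasParams TG (insert c W) (insert c A) S R' Q ↔ c ∉ R' ∧ HasParams TG W A S R' Q := by
  have hcL : c ∉ TG.L := TannerGraph.notMem_L_of_mem_R hcR
  have hR' : W ∩ TG.Gamma S = R' → c ∉ R' := fun h hcR' => hcW (h.symm ▸ hcR').1
  rw [hasParams_iff_inter_gamma_eq, hasParams_iff_inter_gamma_eq,
    Set.insert_inter_of_notMem hcL, Set.insert_inter_of_notMem hcL, Set.insert_inter_of_notMem hc]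
  tauto

theorem HasParams.odd_ncard_iff_mem_gamma (h : HasParams TG W A S R' Q) (hcR : c ∈ TG.R)
    (hN : TG.G.neighborSet c ∩ W ⊆ A) (hWU : W ⊆ U) :
    Odd (TG.G.neighborSet c ∩ U ∩ Q).ncard ↔ c ∈ TG.Gamma S := by
  obtain ⟨-, hS, rfl, -⟩ := h
  have hNS : TG.G.neighborSet c ∩ U ∩ (S ∩ (A ∩ TG.L)) = TG.G.neighborSet c ∩ S :=
    Set.Subset.antisymm (fun _ hv => ⟨hv.1.1, hv.2.1⟩) fun _ hv =>
      have hvW := (hS hv.2).1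
      ⟨⟨hv.1, hWU hvW⟩, hv.2, hN ⟨hv.1, hvW⟩, (hS hv.2).2⟩
  rw [hNS]
  exact (and_iff_right hcR).symm

theorem hasParams_insert_iff (hcR : c ∈ TG.R) (hcW : c ∉ W)
    (hN : TG.G.neighborSet c ∩ W ⊆ A) :
    HasParams TG (insert c W) (insert c A) S R' Q ↔
      (Odd (TG.G.neighborSet c ∩ insert c W ∩ Q).ncard ∧ c ∈ R' ∧
          HasParams TG W A S (R' \ {c}) Q) ∨
        (Even (TG.G.neighborSet c ∩ insert c W ∩ Q).ncard ∧ c ∉ R' ∧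
          HasParams TG W A S R' Q) := by
  have hodd {R''} (h : HasParams TG W A S R'' Q) :
      Odd (TG.G.neighborSet c ∩ insert c W ∩ Q).ncard ↔ c ∈ TG.Gamma S :=
    h.odd_ncard_iff_mem_gamma hcR hN (Set.subset_insert c W)
  by_cases hc : c ∈ TG.Gamma S
  · rw [hasParams_insert_of_mem_gamma hcW hc]
    refine ⟨fun ⟨hcR', h⟩ => .inl ⟨(hodd h).2 hc, hcR', h⟩, ?_⟩
    rintro (⟨-, h⟩ | ⟨heven, -, h⟩)
    · exact h
    · exact absurd ((hodd h).2 hc) (Nat.not_odd_iff_even.2 heven)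
  · rw [hasParams_insert_of_notMem_gamma hcR hcW hc]
    refine ⟨fun ⟨hcR', h⟩ => .inr ⟨Nat.not_odd_iff_even.1 (hc ∘ (hodd h).1), hcR', h⟩, ?_⟩
    rintro (⟨hodd', -, h⟩ | ⟨-, h⟩)
    · exact absurd ((hodd h).1 hodd') hc
    · exact h

end TrappingSet

/-- `Set.ncard` of an infinite set is `0`, so a check node with infinitely many neighbours in `S`
counts as having an even number of them. -/
theorem stmt_12_general {V ι : Type*}
    (TG : TannerGraph V) (T : SimpleGraph ι) (root : ι) (B : ι → Set V)
    (hD : IsRootedTreeDecomp TG.G T root B)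
    (t t' : ι) (hchild : IsChildOf T root t' t)
    (honly : ∀ s, IsChildOf T root s t → s = t')
    (c : V) (hcR : c ∈ TG.R) (hcB : c ∉ B t') (hBt : B t = B t' ∪ {c})
    (R' Q S : Set V) :
    HasParams TG (subVerts T root B t) (B t) S R' Q ↔
      ((Odd ((TG.G.neighborSet c ∩ subVerts T root B t ∩ Q).ncard) ∧ c ∈ R' ∧
          HasParams TG (subVerts T root B t') (B t') S (R' \ {c}) Q) ∨
       (Even ((TG.G.neighborSet c ∩ subVerts T root B t ∩ Q).ncard) ∧ c ∉ R' ∧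
          HasParams TG (subVerts T root B t') (B t') S R' Q)) := by
  have hBt' : B t = insert c (B t') := hBt.trans Set.union_singleton
  have hcW : c ∉ subVerts T root B t' := fun hc =>
    hcB (hD.mem_bag_of_mem_subVerts_of_not_desc hc (hchild.not_desc hD.isTree.isAcyclic)
      (hBt' ▸ Set.mem_insert c _))
  have hN : TG.G.neighborSet c ∩ subVerts T root B t' ⊆ B t' := fun _ hv =>
    hD.mem_bag_of_adj_of_notMem_subVerts hv.1 hcW hv.2
  have hchildren : {s | IsChildOf T root s t} = {t'} :=
    Set.eq_singleton_iff_unique_mem.2 ⟨hchild, honly⟩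
  have hW : subVerts T root B t = insert c (subVerts T root B t') := by
    rw [subVerts_eq_bag_union_biUnion_isChildOf hD.isTree, hchildren, Set.biUnion_singleton,
      hBt', Set.insert_union,
      Set.union_eq_right.2 (bag_subset_subVerts (hD.isTree.connected root t'))]
  rw [hW, hBt']
  exact hasParams_insert_iff hcR hcW hN

/-- introduce-check-node rule. -/
theorem stmt_12 {V ι : Type*} [Fintype V] [Fintype ι]
    (TG : TannerGraph V) (T : SimpleGraph ι) (root : ι) (B : ι → Set V)
    (hD : IsRootedTreeDecomp TG.G T root B)
    (t t' : ι) (hchild : IsChildOf T root t' t)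
    (honly : ∀ s, IsChildOf T root s t → s = t')
    (c : V) (hcR : c ∈ TG.R) (hcB : c ∉ B t') (hBt : B t = B t' ∪ {c})
    (R' Q : Set V) (hR' : R' ⊆ B t ∩ TG.R) (hQ : Q ⊆ B t ∩ TG.L)
    (S : Set V) :
    HasParams TG (subVerts T root B t) (B t) S R' Q ↔
      ((Odd ((TG.G.neighborSet c ∩ subVerts T root B t ∩ Q).ncard) ∧ c ∈ R' ∧
          HasParams TG (subVerts T root B t') (B t') S (R' \ {c}) Q) ∨
       (Even ((TG.G.neighborSet c ∩ subVerts T root B t ∩ Q).ncard) ∧ c ∉ R' ∧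
          HasParams TG (subVerts T root B t') (B t') S R' Q)) :=
  stmt_12_general TG T root B hD t t' hchild honly c hcR hcB hBt R' Q S
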